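/- Let E be a real normed vector space and let β : ℝ → E be differentiable with derivative β' interval-integrable on compact intervals. Fix z_t ≤ z̄ ≤ z', b̂ ∈ E, d ∈ E, and set β̂(z') = b̂ + (z' - z_t) • d. Assume ‖b̂ - β(z_t)‖ ≤ ε₁, ‖d - β'(z_t)‖ ≤ ε₂, and that β' is K-Lipschitz on [z_t, z̄]. Then ‖β̂(z') - β(z')‖ ≤ ε₁ + ε₂·(z' - z_t) + ‖∫_{z̄}^{z'} (β'(z_t) - β'(s)) ds‖ + (K/2)·(z̄ - z_t)². -/

import Mathlib

/-!
Let `v = β' z_t`. The error at `z'` splits into three parts: the predictor line against the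
tangent line `t ↦ β z_t + (t - z_t) • v`, which contributes `ε₁ + ε₂ * (z' - z_t)`; the deviation
of `β` from slope `v` over `[z_t, z̄]`; and the same deviation over `[z̄, z']`, an integral
of `v - β'`. On `[z_t, z̄]` the speed of deviation `‖β' s - v‖` is at most `K * (s - z_t)`, the
derivative of `K / 2 * (s - z_t) ^ 2`, so the mean value inequality bounds the deviation there.
-/

open MeasureTheory intervalIntegral

open Set

section TangentLine

variable {E : Type*} [NormedAddCommGroup E] [NormedSpace ℝ E]

theorem norm_add_smul_sub_add_smul_le {x y v w : E} {ε δ t : ℝ} (ht : 0 ≤ t)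
    (hxy : ‖x - y‖ ≤ ε) (hvw : ‖v - w‖ ≤ δ) :
    ‖(x + t • v) - (y + t • w)‖ ≤ ε + δ * t := by
  calc ‖(x + t • v) - (y + t • w)‖ = ‖(x - y) + t • (v - w)‖ := by congr 1; module
    _ ≤ ‖x - y‖ + ‖v - w‖ * t := by
      grw [norm_add_le, norm_smul, Real.norm_of_nonneg ht, mul_comm]
    _ ≤ ε + δ * t := by gcongr

theorem norm_sub_sub_smul_le_of_norm_deriv_right_sub_le {f f' : ℝ → E} {v : E} {a b K : ℝ}
    (hab : a ≤ b) (hf : ContinuousOn f (Icc a b))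
    (hf' : ∀ s ∈ Ico a b, HasDerivWithinAt f (f' s) (Ici s) s)
    (hK : ∀ s ∈ Ico a b, ‖f' s - v‖ ≤ K * (s - a)) :
    ‖f b - f a - (b - a) • v‖ ≤ K / 2 * (b - a) ^ 2 := by
  have hcont : ContinuousOn (fun s ↦ f s - f a - (s - a) • v) (Icc a b) := by fun_prop
  have hderiv : ∀ s ∈ Ico a b,
      HasDerivWithinAt (fun s ↦ f s - f a - (s - a) • v) (f' s - v) (Ici s) s := fun s hs ↦ by
    simpa using ((hf' s hs).sub_const (f a)).fun_sub
      (((hasDerivWithinAt_id s (Ici s)).sub_const a).smul_const v)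
  have hquadratic : ∀ s, HasDerivAt (fun s ↦ K / 2 * (s - a) ^ 2) (K * (s - a)) s := fun s ↦ by
    have := (((hasDerivAt_id' s).sub_const a).fun_pow 2).const_mul (K / 2)
    exact this.congr_deriv (by push_cast; ring)
  exact image_norm_le_of_norm_deriv_right_le_deriv_boundary hcont hderiv (by simp) hquadratic hK
    (right_mem_Icc.mpr hab)

theorem integral_const_sub_deriv_right_eq [CompleteSpace E] {f f' : ℝ → E} {a b : ℝ} (v : E)
    (hf : ContinuousOn f (uIcc a b))
    (hf' : ∀ s ∈ Ioo (min a b) (max a b), HasDerivWithinAt f (f' s) (Ioi s) s)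
    (hint : IntervalIntegrable f' volume a b) :
    ∫ s in a..b, (v - f' s) = (b - a) • v - (f b - f a) := by
  rw [integral_sub intervalIntegrable_const hint, intervalIntegral.integral_const,
    integral_eq_sub_of_hasDeriv_right hf hf' hint]

theorem norm_add_smul_sub_le_norm_integral_add [CompleteSpace E] {f f' : ℝ → E} {v : E}
    {a b c T K : ℝ} (hb : b ∈ Icc a T) (hc : c ∈ Icc a T) (hf : ContinuousOn f (Icc a T))
    (hf' : ∀ s ∈ Ico a T, HasDerivWithinAt f (f' s) (Ici s) s)
    (hint : IntervalIntegrable f' volume b c)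
    (hK : ∀ s ∈ Ico a b, ‖f' s - v‖ ≤ K * (s - a)) :
    ‖f a + (c - a) • v - f c‖ ≤ ‖∫ s in b..c, (v - f' s)‖ + K / 2 * (b - a) ^ 2 := by
  have hbefore : ‖f b - f a - (b - a) • v‖ ≤ K / 2 * (b - a) ^ 2 :=
    norm_sub_sub_smul_le_of_norm_deriv_right_sub_le hb.1 (hf.mono (Icc_subset_Icc_right hb.2))
      (fun s hs ↦ hf' s (Ico_subset_Ico_right hb.2 hs)) hK
  have hafter : ∫ s in b..c, (v - f' s) = (c - b) • v - (f c - f b) :=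
    integral_const_sub_deriv_right_eq v (hf.mono (uIcc_subset_Icc hb hc))
      (fun s hs ↦ (hf' s ⟨(le_min hb.1 hc.1).trans hs.1.le,
        hs.2.trans_le (max_le hb.2 hc.2)⟩).mono Ioi_subset_Ici_self) hint
  calc ‖f a + (c - a) • v - f c‖
      = ‖(∫ s in b..c, (v - f' s)) - (f b - f a - (b - a) • v)‖ := by
        rw [hafter]; congr 1; module
    _ ≤ ‖∫ s in b..c, (v - f' s)‖ + ‖f b - f a - (b - a) • v‖ := norm_sub_le _ _
    _ ≤ ‖∫ s in b..c, (v - f' s)‖ + K / 2 * (b - a) ^ 2 := by gcongr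

end TangentLine

-- Right derivatives accommodate paths with a kink wherever the active set changes.
theorem whole_path_error_bound_general
    {E : Type*} [NormedAddCommGroup E] [NormedSpace ℝ E] [CompleteSpace E]
    {β β' : ℝ → E} {z_t zbar z' T : ℝ} (hzbar : zbar ∈ Icc z_t T) (hz' : z' ∈ Icc z_t T)
    (hcont : ContinuousOn β (Icc z_t T))
    (hderiv : ∀ s ∈ Ico z_t T, HasDerivWithinAt β (β' s) (Ici s) s)
    (hint : IntervalIntegrable β' volume zbar z')
    {bhat d : E} {ε₁ ε₂ K : ℝ} (hval : ‖bhat - β z_t‖ ≤ ε₁) (hder : ‖d - β' z_t‖ ≤ ε₂)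
    (hK : ∀ s ∈ Ico z_t zbar, ‖β' s - β' z_t‖ ≤ K * (s - z_t)) :
    ‖(bhat + (z' - z_t) • d) - β z'‖ ≤
      ε₁ + ε₂ * (z' - z_t) + ‖∫ s in zbar..z', (β' z_t - β' s)‖
        + (K / 2) * (zbar - z_t) ^ 2 := by
  have hpredictor : ‖(bhat + (z' - z_t) • d) - (β z_t + (z' - z_t) • β' z_t)‖ ≤
      ε₁ + ε₂ * (z' - z_t) :=
    norm_add_smul_sub_add_smul_le (sub_nonneg.mpr hz'.1) hval hder
  have htangent : ‖β z_t + (z' - z_t) • β' z_t - β z'‖ ≤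
      ‖∫ s in zbar..z', (β' z_t - β' s)‖ + K / 2 * (zbar - z_t) ^ 2 :=
    norm_add_smul_sub_le_norm_integral_add hzbar hz' hcont hderiv hint hK
  rw [add_assoc]
  exact (norm_sub_le_norm_sub_add_norm_sub _ _ _).trans (add_le_add hpredictor htangent)

/-- Whole-path error theorem for the approximate homotopy algorithm: `z_t` is the last
corrector point, `z̄` is the first point after `z_t` where the active set changes (so `β'`
is `K`-Lipschitz on `[z_t, z̄]` with `K = |A| L₃ M`), and `β̂ z' = bhat + (z' - z_t) • d`
is the predictor extrapolation with value error `ε₁` and derivative error `ε₂`. -/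
theorem whole_path_error_bound
    {E : Type*} [NormedAddCommGroup E] [NormedSpace ℝ E] [CompleteSpace E]
    (β β' : ℝ → E) (hderiv : ∀ x : ℝ, HasDerivAt β (β' x) x)
    (hint : ∀ a b : ℝ, IntervalIntegrable β' volume a b)
    (z_t zbar z' : ℝ) (hz₁ : z_t ≤ zbar) (hz₂ : zbar ≤ z')
    (bhat d : E) (ε₁ ε₂ K : ℝ)
    (hval : ‖bhat - β z_t‖ ≤ ε₁) (hder : ‖d - β' z_t‖ ≤ ε₂)
    (hLip : ∀ s ∈ Set.Icc z_t zbar, ∀ u ∈ Set.Icc z_t zbar,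
      ‖β' s - β' u‖ ≤ K * |s - u|) :
    ‖(bhat + (z' - z_t) • d) - β z'‖ ≤
      ε₁ + ε₂ * (z' - z_t) + ‖∫ s in zbar..z', (β' z_t - β' s)‖
        + (K / 2) * (zbar - z_t) ^ 2 := by
  refine whole_path_error_bound_general ⟨hz₁, hz₂⟩ ⟨hz₁.trans hz₂, le_rfl⟩
    (fun s _ ↦ (hderiv s).continuousAt.continuousWithinAt)
    (fun s _ ↦ (hderiv s).hasDerivWithinAt) (hint zbar z') hval hder fun s hs ↦ ?_
  simpa only [abs_of_nonneg (sub_nonneg.mpr hs.1)] using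
    hLip s (Ico_subset_Icc_self hs) z_t (left_mem_Icc.mpr hz₁)
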